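/- Define the 2n×2n real matrix M_∅ indexed by pairs (i,s) ∈ [n]×{in,out} by M_∅((i,s),(j,t)) = (1/(n−1))·(Pr[j has state t | i has state s] − Pr[j has state t]) for i ≠ j, and M_∅((i,s),(i,t)) = 0. Then charpoly(M_∅) = X^n · charpoly((1/(n−1))·Ψ_μ) in ℝ[X]; that is, the spectrum of M_∅ as a multiset is the union of the spectrum of (1/(n−1))·Ψ_μ with n additional copies of 0. -/

import Mathlib

/-!
Passing from `j ∈ S` to `j ∉ S`, or from conditioning on `i ∈ S` to conditioning on `i ∉ S`, only
flips the sign of the influence of `i` on `j`. By the law of total probability, the `(i, j)` block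
of `M_∅` is therefore `1 / (n - 1) * Ψ_μ i j` times the rank one matrix with entries
`u (i, s) * v (j, t)`, where `v` is the sign of the state and `u (i, s)` is that sign times the
probability that `i` is *not* in state `s`. So `M_∅ = U (1 / (n - 1) • Ψ_μ) Vᵀ`, and `Vᵀ U = 1`
because the probabilities of the two states of `i` add up to one. Exchanging the factors `U` and
`(1 / (n - 1) • Ψ_μ) Vᵀ` changes the characteristic polynomial only by a power of `X`.
-/

open scoped Classical
open Finset Polynomial

noncomputable section

namespace PaperStmt

variable {n : ℕ}

/-- Probability of an event under `μ`. -/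
def prE (μ : Finset (Fin n) → ℝ) (E : Finset (Fin n) → Prop) : ℝ :=
  ∑ S : Finset (Fin n), if E S then μ S else 0

/-- Conditional probability `Pr[E | F]` under `μ`. -/
def condPrE (μ : Finset (Fin n) → ℝ) (E F : Finset (Fin n) → Prop) : ℝ :=
  prE μ (fun S => E S ∧ F S) / prE μ F

/-- The pairwise influence matrix `Ψ_μ`. -/
def psi (μ : Finset (Fin n) → ℝ) : Matrix (Fin n) (Fin n) ℝ :=
  fun i j => if i = j then 0 else
    condPrE μ (fun S => j ∈ S) (fun S => i ∈ S)
      - condPrE μ (fun S => j ∈ S) (fun S => i ∉ S)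

/-- The event "`i` has state `s`" (`true` = in, `false` = out). -/
def stateEvent (i : Fin n) (s : Bool) : Finset (Fin n) → Prop :=
  fun S => if s then i ∈ S else i ∉ S

/-- The centered walk matrix `M_∅`. -/
def centeredWalk (μ : Finset (Fin n) → ℝ) :
    Matrix (Fin n × Bool) (Fin n × Bool) ℝ :=
  fun p q => if p.1 = q.1 then 0 else
    (1 / ((n : ℝ) - 1)) *
      (condPrE μ (stateEvent q.1 q.2) (stateEvent p.1 p.2)
        - prE μ (stateEvent q.1 q.2))

section BlockColumn

open scoped Matrix

variable {ι κ R : Type*} [DecidableEq ι]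

lemma pow_card_mul_charpoly_mul_mul_of_mul_eq_one [Fintype ι] [Fintype κ] [DecidableEq κ]
    [CommRing R] {U : Matrix κ ι R} {V : Matrix ι κ R} (hVU : V * U = 1) (A : Matrix ι ι R) :
    X ^ Fintype.card ι * (U * A * V).charpoly = X ^ Fintype.card κ * A.charpoly := by
  rw [Matrix.mul_assoc, Matrix.charpoly_mul_comm', Matrix.mul_assoc, hVU, Matrix.mul_one]

/-- The block diagonal matrix whose `i`-th diagonal block is the single column `u (i, ·)`.
It factors matrices on `ι × κ` all of whose blocks have rank one. -/
def blockColumn [Zero R] (u : ι × κ → R) : Matrix (ι × κ) ι R :=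
  Matrix.of fun p k => if p.1 = k then u p else 0

lemma blockColumn_mul_mul_transpose_apply [Fintype ι] [NonUnitalNonAssocSemiring R]
    (u v : ι × κ → R) (A : Matrix ι ι R) (p q : ι × κ) :
    (blockColumn u * A * (blockColumn v)ᵀ) p q = u p * A p.1 q.1 * v q := by
  simp [blockColumn, Matrix.mul_apply]

lemma transpose_blockColumn_mul_blockColumn [Fintype ι] [Fintype κ]
    [NonUnitalNonAssocSemiring R] (u v : ι × κ → R) :
    (blockColumn v)ᵀ * blockColumn u = Matrix.diagonal fun i => ∑ s, v (i, s) * u (i, s) := by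
  ext i j
  rcases eq_or_ne i j with rfl | hij
  · simp [blockColumn, Matrix.mul_apply, Fintype.sum_prod_type]
  · simp [blockColumn, Matrix.mul_apply, Fintype.sum_prod_type, hij, hij.symm]

end BlockColumn

section Probability

variable {μ : Finset (Fin n) → ℝ}

lemma prE_true (μ : Finset (Fin n) → ℝ) : prE μ (fun _ => True) = ∑ S, μ S := by
  simp [prE]

lemma prE_and_add_prE_not_and (μ : Finset (Fin n) → ℝ) (E F : Finset (Fin n) → Prop) :
    prE μ (fun S => E S ∧ F S) + prE μ (fun S => ¬ E S ∧ F S) = prE μ F := by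
  simp only [prE, ← Finset.sum_add_distrib]
  refine Finset.sum_congr rfl fun S _ => ?_
  by_cases hE : E S <;> simp [hE]

lemma prE_add_prE_not (μ : Finset (Fin n) → ℝ) (E : Finset (Fin n) → Prop) :
    prE μ E + prE μ (fun S => ¬ E S) = ∑ S, μ S := by
  simpa only [and_true, prE_true] using prE_and_add_prE_not_and μ E fun _ => True

lemma condPrE_mul_prE {F : Finset (Fin n) → Prop} (hF : prE μ F ≠ 0)
    (E : Finset (Fin n) → Prop) :
    condPrE μ E F * prE μ F = prE μ (fun S => E S ∧ F S) :=
  div_mul_cancel₀ _ hF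

lemma condPrE_add_condPrE_not {F : Finset (Fin n) → Prop} (hF : prE μ F ≠ 0)
    (E : Finset (Fin n) → Prop) :
    condPrE μ E F + condPrE μ (fun S => ¬ E S) F = 1 := by
  rw [condPrE, condPrE, ← add_div, prE_and_add_prE_not_and, div_self hF]

lemma prE_eq_condPrE_mul_add_condPrE_not_mul {F : Finset (Fin n) → Prop} (hF : prE μ F ≠ 0)
    (hF' : prE μ (fun S => ¬ F S) ≠ 0) (E : Finset (Fin n) → Prop) :
    prE μ E = condPrE μ E F * prE μ F
      + condPrE μ E (fun S => ¬ F S) * prE μ (fun S => ¬ F S) := by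
  rw [condPrE_mul_prE hF, condPrE_mul_prE hF', ← prE_and_add_prE_not_and μ F E]
  simp only [and_comm]

/-- The influence `Pr[E | F] - Pr[E | ¬F]` of the event `F` on the event `E`; the off-diagonal
entries of `psi` are the case where `E` and `F` are membership events. -/
def influence (μ : Finset (Fin n) → ℝ) (E F : Finset (Fin n) → Prop) : ℝ :=
  condPrE μ E F - condPrE μ E (fun S => ¬ F S)

lemma influence_not_right (μ : Finset (Fin n) → ℝ) (E F : Finset (Fin n) → Prop) :
    influence μ E (fun S => ¬ F S) = -influence μ E F := by
  simp only [influence, not_not, neg_sub]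

lemma influence_not_left {F : Finset (Fin n) → Prop} (hF : prE μ F ≠ 0)
    (hF' : prE μ (fun S => ¬ F S) ≠ 0) (E : Finset (Fin n) → Prop) :
    influence μ (fun S => ¬ E S) F = -influence μ E F := by
  have h := condPrE_add_condPrE_not hF E
  have h' := condPrE_add_condPrE_not hF' E
  simp only [influence]
  linarith

lemma condPrE_sub_prE (hsum : ∑ S, μ S = 1) {F : Finset (Fin n) → Prop} (hF : prE μ F ≠ 0)
    (hF' : prE μ (fun S => ¬ F S) ≠ 0) (E : Finset (Fin n) → Prop) :
    condPrE μ E F - prE μ E = prE μ (fun S => ¬ F S) * influence μ E F := by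
  have hF_add : prE μ F = 1 - prE μ (fun S => ¬ F S) :=
    eq_sub_of_add_eq ((prE_add_prE_not μ F).trans hsum)
  rw [prE_eq_condPrE_mul_add_condPrE_not_mul hF hF' E, influence, hF_add]
  ring

end Probability

section States

variable {μ : Finset (Fin n) → ℝ}

/-- The sign of a state: `1` for "in" and `-1` for "out". -/
def stateSign (s : Bool) : ℝ := if s then 1 else -1

lemma stateSign_mul_self (s : Bool) : stateSign s * stateSign s = 1 := by
  cases s <;> simp [stateSign]

lemma stateEvent_true (i : Fin n) : stateEvent i true = fun S => i ∈ S := by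
  funext S
  simp [stateEvent]

lemma stateEvent_false (i : Fin n) : stateEvent i false = fun S => i ∉ S := by
  funext S
  simp [stateEvent]

lemma stateEvent_not (i : Fin n) (s : Bool) :
    stateEvent i (!s) = fun S => ¬ stateEvent i s S := by
  funext S
  cases s <;> simp [stateEvent]

lemma sum_prE_stateEvent (μ : Finset (Fin n) → ℝ) (i : Fin n) :
    ∑ s, prE μ (stateEvent i s) = ∑ S, μ S := by
  rw [Fintype.sum_bool, stateEvent_true, stateEvent_false, prE_add_prE_not]

lemma prE_stateEvent_ne_zero (hsum : ∑ S, μ S = 1) {i : Fin n}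
    (hi : prE μ (fun S => i ∈ S) ≠ 0 ∧ prE μ (fun S => i ∈ S) ≠ 1) (s : Bool) :
    prE μ (stateEvent i s) ≠ 0 := by
  cases s with
  | true => simpa only [stateEvent_true] using hi.1
  | false =>
    intro h_out
    have h_total := (prE_add_prE_not μ fun S => i ∈ S).trans hsum
    rw [← stateEvent_false, h_out, add_zero] at h_total
    exact hi.2 h_total

lemma influence_stateEvent {i : Fin n} (hi : ∀ s, prE μ (stateEvent i s) ≠ 0) (j : Fin n)
    (s t : Bool) :
    influence μ (stateEvent j t) (stateEvent i s) =
      stateSign s * stateSign t * influence μ (fun S => j ∈ S) (fun S => i ∈ S) := by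
  have h_in := hi true
  have h_out := hi false
  rw [stateEvent_true] at h_in
  rw [stateEvent_false] at h_out
  cases s <;> cases t <;>
    simp [stateEvent_true, stateEvent_false, stateSign, influence_not_right,
      influence_not_left h_in h_out]

lemma condPrE_stateEvent_sub_prE (hsum : ∑ S, μ S = 1) {i : Fin n}
    (hi : ∀ s, prE μ (stateEvent i s) ≠ 0) (j : Fin n) (s t : Bool) :
    condPrE μ (stateEvent j t) (stateEvent i s) - prE μ (stateEvent j t) =
      stateSign s * prE μ (stateEvent i (!s)) * influence μ (fun S => j ∈ S) (fun S => i ∈ S) *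
        stateSign t := by
  have hi_not := hi (!s)
  rw [stateEvent_not] at hi_not ⊢
  rw [condPrE_sub_prE hsum (hi s) hi_not, influence_stateEvent hi]
  ring

end States

section CenteredWalk

open scoped Matrix

variable {μ : Finset (Fin n) → ℝ}

lemma psi_apply_of_ne (μ : Finset (Fin n) → ℝ) {i j : Fin n} (hij : i ≠ j) :
    psi μ i j = influence μ (fun S => j ∈ S) (fun S => i ∈ S) :=
  if_neg hij

/-- The matrix `U` in the factorization `M_∅ = U (1 / (n - 1) • Ψ_μ) Vᵀ`; the state occurring in the
probability is the opposite of the row's state. -/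
def oppositeStateColumn (μ : Finset (Fin n) → ℝ) : Matrix (Fin n × Bool) (Fin n) ℝ :=
  blockColumn fun p => stateSign p.2 * prE μ (stateEvent p.1 (!p.2))

/-- The matrix `V` in the factorization `M_∅ = U (1 / (n - 1) • Ψ_μ) Vᵀ`. -/
def stateSignColumn (n : ℕ) : Matrix (Fin n × Bool) (Fin n) ℝ :=
  blockColumn fun p => stateSign p.2

lemma transpose_stateSignColumn_mul_oppositeStateColumn (hsum : ∑ S, μ S = 1) :
    (stateSignColumn n)ᵀ * oppositeStateColumn μ = 1 := by
  have h_total (i : Fin n) : ∑ s, prE μ (stateEvent i (!s)) = 1 :=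
    (Equiv.sum_comp Equiv.boolNot fun s => prE μ (stateEvent i s)).trans
      ((sum_prE_stateEvent μ i).trans hsum)
  rw [stateSignColumn, oppositeStateColumn, transpose_blockColumn_mul_blockColumn]
  simp only [← mul_assoc, stateSign_mul_self, one_mul, h_total, Matrix.diagonal_one]

lemma centeredWalk_eq_mul_psi_mul (hsum : ∑ S, μ S = 1)
    (hstate : ∀ i s, prE μ (stateEvent i s) ≠ 0) :
    centeredWalk μ =
      oppositeStateColumn μ * ((1 / ((n : ℝ) - 1)) • psi μ) * (stateSignColumn n)ᵀ := by
  ext ⟨i, s⟩ ⟨j, t⟩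
  rw [oppositeStateColumn, stateSignColumn, blockColumn_mul_mul_transpose_apply]
  by_cases hij : i = j
  · simp [centeredWalk, psi, hij]
  · simp only [centeredWalk, hij, if_false, Matrix.smul_apply, smul_eq_mul,
      psi_apply_of_ne μ hij, condPrE_stateEvent_sub_prE hsum (hstate i)]
    ring

end CenteredWalk

theorem statement8_general (μ : Finset (Fin n) → ℝ) (hsum : ∑ S, μ S = 1)
    (hmarg : ∀ i : Fin n, prE μ (fun S => i ∈ S) ≠ 0 ∧ prE μ (fun S => i ∈ S) ≠ 1) :
    (centeredWalk μ).charpoly = X ^ n * ((1 / ((n : ℝ) - 1)) • psi μ).charpoly := by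
  have hfactor := centeredWalk_eq_mul_psi_mul hsum fun i => prE_stateEvent_ne_zero hsum (hmarg i)
  have hcharpoly := pow_card_mul_charpoly_mul_mul_of_mul_eq_one
    (transpose_stateSignColumn_mul_oppositeStateColumn hsum) ((1 / ((n : ℝ) - 1)) • psi μ)
  rw [← hfactor, Fintype.card_prod, Fintype.card_fin, Fintype.card_bool, mul_two, pow_add,
    mul_assoc] at hcharpoly
  exact mul_left_cancel₀ (pow_ne_zero n X_ne_zero) hcharpoly

/-- `charpoly(M_∅) = X^n · charpoly((1/(n-1)) • Ψ_μ)`. -/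
theorem statement8 (n : ℕ) (hn : 2 ≤ n) (μ : Finset (Fin n) → ℝ)
    (hpos : ∀ S, 0 ≤ μ S) (hsum : ∑ S : Finset (Fin n), μ S = 1)
    (hmarg : ∀ i : Fin n, 0 < prE μ (fun S => i ∈ S)
      ∧ prE μ (fun S => i ∈ S) < 1) :
    (centeredWalk μ).charpoly
      = X ^ n * ((1 / ((n : ℝ) - 1)) • psi μ).charpoly :=
  statement8_general μ hsum fun i => ⟨(hmarg i).1.ne', (hmarg i).2.ne⟩

end PaperStmt
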